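/- Let m, n be positive integers, A ∈ M_{n,m}(𝔽_q((z⁻¹))) and θ = (θ_1, …, θ_n)ᵀ ∈ 𝔽_q((z⁻¹))ⁿ. Then the following are equivalent: (1) for every ε > 0 there exists a polynomial vector x ∈ 𝔽_q[z]^m such that ⟨Ax − θ⟩ ≤ ε; (2) for every polynomial vector u = (u_1, …, u_n)ᵀ ∈ 𝔽_q[z]ⁿ such that Aᵀu ∈ 𝔽_q[z]^m, one has u_1θ_1 + ⋯ + u_nθ_n ∈ 𝔽_q[z]. -/

import Mathlib

/-!
Common setup: the field `𝔽_q((z⁻¹))` of formal power series over a finite field `K` of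
cardinality `q`, modeled as the field `FF K` of formal Laurent series in `t = z⁻¹`,
together with its non-Archimedean norm, the embedding of the polynomial ring `𝔽_q[z]`,
distances to polynomial (vectors), Diophantine exponents, `Bad` sets, continued fractions
and best approximation sequences.
-/

open scoped Classical ENNReal NNReal
open Filter

noncomputable section

namespace FPSDA

variable (K : Type*) [Field K] [Fintype K]

/-- The field `𝔽_q((z⁻¹))` of formal power series in `z⁻¹` over the finite field `K = 𝔽_q`,
modeled as the field of formal Laurent series in the variable `t = z⁻¹`. -/
def FF : Type _ := LaurentSeries K

instance : Field (FF K) := inferInstanceAs (Field (LaurentSeries K))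

variable {K}

/-- The identity map, viewing an element of `𝔽_q((z⁻¹))` as a Laurent series in `t = z⁻¹`. -/
def toL (x : FF K) : LaurentSeries K := x

@[simp] lemma toL_zero : toL (0 : FF K) = 0 := rfl
@[simp] lemma toL_add (x y : FF K) : toL (x + y) = toL x + toL y := rfl
@[simp] lemma toL_neg (x : FF K) : toL (-x) = -toL x := rfl
@[simp] lemma toL_sub (x y : FF K) : toL (x - y) = toL x - toL y := rfl
lemma toL_eq_zero {x : FF K} : toL x = 0 ↔ x = 0 := Iff.rfl

/-- The norm `‖x‖ = q ^ (deg x)` on `𝔽_q((z⁻¹))`, where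
`deg x = - (order of x as a Laurent series in z⁻¹)`; `‖0‖ = 0`. -/
def fnorm (x : FF K) : ℝ :=
  if toL x = 0 then 0 else (Fintype.card K : ℝ) ^ (-(toL x).order)

lemma one_le_q : (1 : ℝ) ≤ (Fintype.card K : ℝ) := by
  exact_mod_cast Fintype.card_pos

lemma fnorm_nonneg (x : FF K) : 0 ≤ fnorm x := by
  unfold fnorm
  split_ifs
  · exact le_refl 0
  · exact zpow_nonneg (by positivity) _

lemma fnorm_eq_zero {x : FF K} : fnorm x = 0 ↔ x = 0 := by
  unfold fnorm
  split_ifs with h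
  · exact ⟨fun _ => toL_eq_zero.mp h, fun _ => rfl⟩
  · constructor
    · intro hc
      exact absurd hc (zpow_ne_zero _ (by
        have h0 : (0:ℝ) < (Fintype.card K : ℝ) := by positivity
        exact ne_of_gt h0))
    · intro hc
      exact absurd (toL_eq_zero.mpr hc) h

lemma fnorm_neg (x : FF K) : fnorm (-x) = fnorm x := by
  unfold fnorm
  rw [toL_neg]
  simp [neg_eq_zero, HahnSeries.order_neg]

lemma fnorm_add_le (x y : FF K) : fnorm (x + y) ≤ max (fnorm x) (fnorm y) := by
  by_cases hxy : x + y = 0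
  · rw [fnorm_eq_zero.mpr hxy]
    exact le_max_of_le_left (fnorm_nonneg x)
  by_cases hx : x = 0
  · rw [hx, zero_add]
    exact le_max_right _ _
  by_cases hy : y = 0
  · rw [hy, add_zero]
    exact le_max_left _ _
  have horder : min (toL x).order (toL y).order ≤ (toL (x + y)).order := by
    rw [toL_add]
    exact HahnSeries.min_order_le_order_add (show toL x + toL y ≠ 0 from hxy)
  have h1 : fnorm (x + y) = (Fintype.card K : ℝ) ^ (-(toL (x+y)).order) := by
    unfold fnorm
    rw [if_neg (show toL (x + y) ≠ 0 from hxy)]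
  rcases le_total (toL x).order (toL y).order with h | h
  · have h2 : (toL x).order ≤ (toL (x+y)).order := le_trans (by simp [min_eq_left h]) horder
    refine le_max_of_le_left ?_
    rw [h1]
    unfold fnorm
    rw [if_neg (show toL x ≠ 0 from hx)]
    exact zpow_le_zpow_right₀ one_le_q (by omega)
  · have h2 : (toL y).order ≤ (toL (x+y)).order := le_trans (by simp [min_eq_right h]) horder
    refine le_max_of_le_right ?_
    rw [h1]
    unfold fnorm
    rw [if_neg (show toL y ≠ 0 from hy)]
    exact zpow_le_zpow_right₀ one_le_q (by omega)

/-- The (ultra)metric `dist x y = ‖x - y‖` on `𝔽_q((z⁻¹))`. -/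
instance : MetricSpace (FF K) where
  dist x y := fnorm (x - y)
  dist_self x := by
    show fnorm (x - x) = 0
    rw [sub_self]
    exact fnorm_eq_zero.mpr rfl
  dist_comm x y := by
    show fnorm (x - y) = fnorm (y - x)
    have h : x - y = -(y - x) := by ring
    rw [h, fnorm_neg]
  dist_triangle x y z := by
    show fnorm (x - z) ≤ fnorm (x - y) + fnorm (y - z)
    have h : x - z = (x - y) + (y - z) := by ring
    calc fnorm (x - z) ≤ max (fnorm (x - y)) (fnorm (y - z)) := by
          rw [h]; exact fnorm_add_le _ _
      _ ≤ fnorm (x - y) + fnorm (y - z) :=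
        max_le (le_add_of_nonneg_right (fnorm_nonneg _)) (le_add_of_nonneg_left (fnorm_nonneg _))
  eq_of_dist_eq_zero := by
    intro x y h
    have h' : x - y = 0 := fnorm_eq_zero.mp h
    exact sub_eq_zero.mp h'

instance : MeasurableSpace (FF K) := borel _
instance : BorelSpace (FF K) := ⟨rfl⟩

/-- The canonical embedding of the polynomial ring `𝔽_q[z]` into `𝔽_q((z⁻¹))`:
the variable `z` is sent to `t⁻¹ = single (-1) 1`. -/
def polyF (P : Polynomial K) : FF K :=
  Polynomial.aeval (HahnSeries.single (-1 : ℤ) (1 : K)) P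

/-- Supremum norm of a vector with entries in `𝔽_q((z⁻¹))`. -/
def vnorm {ι : Type*} [Fintype ι] (v : ι → FF K) : ℝ := ⨆ i, fnorm (v i)

/-- `⟨v⟩`, the distance from the vector `v` to the nearest polynomial vector. -/
def vdist {ι : Type*} [Fintype ι] (v : ι → FF K) : ℝ :=
  ⨅ y : ι → Polynomial K, vnorm (fun i => v i - polyF (y i))

/-- `⟨x⟩`, the distance from the scalar `x` to the nearest polynomial. -/
def sdist (x : FF K) : ℝ := ⨅ y : Polynomial K, fnorm (x - polyF y)

/-- The fractional part `{x} = Σ_{i ≥ 1} a_i z^{-i}` of `x = Σ_i a_i z^{-i}`. -/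
def fracPart (x : FF K) : FF K :=
  (⟨fun i => if 1 ≤ i then (toL x).coeff i else 0, (toL x).isPWO_support'.mono (by
      intro i hi
      by_cases h : (1:ℤ) ≤ i
      · simpa [Function.mem_support, h] using hi
      · simp [Function.mem_support, h] at hi)⟩ : LaurentSeries K)

/-- The integer part `[x] = Σ_{i ≤ 0} a_i z^{-i}` of `x = Σ_i a_i z^{-i}`, as a polynomial
in `z`. -/
def intPoly (x : FF K) : Polynomial K :=
  ∑ i ∈ Finset.range ((-(toL x).order).toNat + 1),
    Polynomial.monomial i ((toL x).coeff (-(i : ℤ)))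

/-- `x ∈ 𝔽_q((z⁻¹))` is irrational if it is not in `𝔽_q(z)`, i.e. is not a ratio of two
polynomials in `z`. -/
def FIrrational (x : FF K) : Prop :=
  ∀ P Q : Polynomial K, Q ≠ 0 → x * polyF Q ≠ polyF P

section Exponents

variable {m n : ℕ}

/-- The norm `‖x‖ = max_j ‖x_j‖` of a polynomial vector `x`. -/
def pnorm {ι : Type*} [Fintype ι] (x : ι → Polynomial K) : ℝ :=
  vnorm (fun i => (polyF (x i) : FF K))

/-- The system `⟨A x - θ⟩ ≤ H^{-ω}`, `‖x‖ ≤ H` has a polynomial solution `x`. -/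
def Solv (A : Matrix (Fin n) (Fin m) (FF K)) (θ : Fin n → FF K) (ω H : ℝ) : Prop :=
  ∃ x : Fin m → Polynomial K,
    vdist (A.mulVec (fun j => polyF (x j)) - θ) ≤ H ^ (-ω) ∧ pnorm x ≤ H

/-- The system `⟨A x⟩ ≤ H^{-ω}`, `‖x‖ ≤ H` has a nonzero polynomial solution `x`. -/
def SolvHom (A : Matrix (Fin n) (Fin m) (FF K)) (ω H : ℝ) : Prop :=
  ∃ x : Fin m → Polynomial K, x ≠ 0 ∧
    vdist (A.mulVec (fun j => polyF (x j))) ≤ H ^ (-ω) ∧ pnorm x ≤ H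

/-- The inhomogeneous exponent `ω(A, θ)`: the supremum (in `[0,∞]`) of all `ω` such that
for arbitrarily large `H` the system `⟨A x - θ⟩ ≤ H^{-ω}`, `‖x‖ ≤ H` has a polynomial
solution. -/
def omegaInhom (A : Matrix (Fin n) (Fin m) (FF K)) (θ : Fin n → FF K) : ℝ≥0∞ :=
  ⨆ (ω : ℝ) (_ : ∀ H₀ : ℝ, ∃ H : ℝ, H₀ ≤ H ∧ Solv A θ ω H), ENNReal.ofReal ω

/-- The uniform inhomogeneous exponent `ω̂(A, θ)`: as `ω(A, θ)`, but with a solution for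
all sufficiently large `H`. -/
def omegaHatInhom (A : Matrix (Fin n) (Fin m) (FF K)) (θ : Fin n → FF K) : ℝ≥0∞ :=
  ⨆ (ω : ℝ) (_ : ∃ H₀ : ℝ, ∀ H : ℝ, H₀ ≤ H → Solv A θ ω H), ENNReal.ofReal ω

/-- The homogeneous exponent `ω(A)`. -/
def omegaHom (A : Matrix (Fin n) (Fin m) (FF K)) : ℝ≥0∞ :=
  ⨆ (ω : ℝ) (_ : ∀ H₀ : ℝ, ∃ H : ℝ, H₀ ≤ H ∧ SolvHom A ω H), ENNReal.ofReal ω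

/-- The uniform homogeneous exponent `ω̂(A)`. -/
def omegaHatHom (A : Matrix (Fin n) (Fin m) (FF K)) : ℝ≥0∞ :=
  ⨆ (ω : ℝ) (_ : ∃ H₀ : ℝ, ∀ H : ℝ, H₀ ≤ H → SolvHom A ω H), ENNReal.ofReal ω

/-- `A` is non-degenerate: the `𝔽_q[z]`-module `Aᵀ 𝔽_q[z]ⁿ + 𝔽_q[z]^m ⊆ 𝔽_q((z⁻¹))^m` has
rank `m + n` over `𝔽_q[z]`, i.e. its `m + n` natural generators are linearly independent
over `𝔽_q[z]`; equivalently, no nonzero polynomial vector `u` makes `Aᵀ u` a polynomial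
vector. -/
def Nondegenerate (A : Matrix (Fin n) (Fin m) (FF K)) : Prop :=
  ∀ u : Fin n → Polynomial K,
    (∃ v : Fin m → Polynomial K,
      A.transpose.mulVec (fun i => polyF (u i)) = fun j => polyF (v j)) → u = 0

/-- `liminf_{x ∈ 𝔽_q[z]^m, ‖x‖ → ∞} ‖x‖^{m/n} ⟨A x - θ⟩`, computed in `[0, ∞]`. -/
def badLiminf (A : Matrix (Fin n) (Fin m) (FF K)) (θ : Fin n → FF K) : ℝ≥0∞ :=
  Filter.liminf
    (fun x : Fin m → Polynomial K =>
      ENNReal.ofReal ((pnorm x) ^ ((m : ℝ) / (n : ℝ)) *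
        vdist (A.mulVec (fun j => polyF (x j)) - θ)))
    (Filter.comap (fun x : Fin m → Polynomial K => pnorm x) Filter.atTop)

/-- The set `Bad^ε(A)` of `θ` in the unit polydisc `𝕀ⁿ` with
`liminf_{‖x‖ → ∞} ‖x‖^{m/n} ⟨A x - θ⟩ ≥ ε`. -/
def Bad (A : Matrix (Fin n) (Fin m) (FF K)) (ε : ℝ) : Set (Fin n → FF K) :=
  {θ | (∀ i, fnorm (θ i) < 1) ∧ ENNReal.ofReal ε ≤ badLiminf A θ}

/-- The set `Bad(A) = ⋃_{ε > 0} Bad^ε(A)`. -/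
def BadAll (A : Matrix (Fin n) (Fin m) (FF K)) : Set (Fin n → FF K) :=
  ⋃ (ε : ℝ) (_ : 0 < ε), Bad A ε

/-- `M(y) = ⟨Aᵀ y⟩` for a polynomial vector `y`. -/
def Mfun (A : Matrix (Fin n) (Fin m) (FF K)) (y : Fin n → Polynomial K) : ℝ :=
  vdist (A.transpose.mulVec (fun i => polyF (y i)))

/-- `y 1, y 2, …` is a sequence of best approximations related to `Aᵀ`:
`1 = Y_1 < Y_2 < ⋯`, `M_1 > M_2 > ⋯`, and `M(x) ≥ M_k` for every nonzero polynomial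
vector `x` with `‖x‖ < Y_{k+1}` (the value `y 0` is irrelevant). -/
def IsBestApproxSeq (A : Matrix (Fin n) (Fin m) (FF K))
    (y : ℕ → Fin n → Polynomial K) : Prop :=
  pnorm (y 1) = 1 ∧
  (∀ k, 1 ≤ k → pnorm (y k) < pnorm (y (k + 1))) ∧
  (∀ k, 1 ≤ k → Mfun A (y (k + 1)) < Mfun A (y k)) ∧
  (∀ k, 1 ≤ k → ∀ x : Fin n → Polynomial K, x ≠ 0 → pnorm x < pnorm (y (k + 1)) →
    Mfun A (y k) ≤ Mfun A x)

end Exponents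

section Scalar

/-- The system `⟨ξ x - θ⟩ ≤ H^{-ω}`, `‖x‖ ≤ H` has a polynomial solution `x`. -/
def sSolv (ξ θ : FF K) (ω H : ℝ) : Prop :=
  ∃ x : Polynomial K, sdist (ξ * polyF x - θ) ≤ H ^ (-ω) ∧ fnorm (polyF x) ≤ H

/-- The scalar inhomogeneous exponent `ω((ξ), θ)`. -/
def somegaInhom (ξ θ : FF K) : ℝ≥0∞ :=
  ⨆ (ω : ℝ) (_ : ∀ H₀ : ℝ, ∃ H : ℝ, H₀ ≤ H ∧ sSolv ξ θ ω H), ENNReal.ofReal ω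

/-- The scalar uniform inhomogeneous exponent `ω̂((ξ), θ)`. -/
def somegaHatInhom (ξ θ : FF K) : ℝ≥0∞ :=
  ⨆ (ω : ℝ) (_ : ∃ H₀ : ℝ, ∀ H : ℝ, H₀ ≤ H → sSolv ξ θ ω H), ENNReal.ofReal ω

/-- The scalar homogeneous exponent `ω((ξ))`. -/
def somegaHom (ξ : FF K) : ℝ≥0∞ :=
  ⨆ (ω : ℝ) (_ : ∀ H₀ : ℝ, ∃ H : ℝ, H₀ ≤ H ∧ ∃ x : Polynomial K, x ≠ 0 ∧
      sdist (ξ * polyF x) ≤ H ^ (-ω) ∧ fnorm (polyF x) ≤ H), ENNReal.ofReal ω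

/-- `liminf_{x ∈ 𝔽_q[z], ‖x‖ → ∞} ‖x‖ ⟨α x - θ⟩`, computed in `[0, ∞]`. -/
def sBadLiminf (α θ : FF K) : ℝ≥0∞ :=
  Filter.liminf
    (fun x : Polynomial K => ENNReal.ofReal (fnorm (polyF x) * sdist (α * polyF x - θ)))
    (Filter.comap (fun x : Polynomial K => fnorm (polyF x)) Filter.atTop)

/-- The set `Bad^ε(α)` of `θ ∈ 𝕀` with `liminf_{‖x‖ → ∞} ‖x‖ ⟨α x - θ⟩ ≥ ε`. -/
def sBad (α : FF K) (ε : ℝ) : Set (FF K) :=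
  {θ | fnorm θ < 1 ∧ ENNReal.ofReal ε ≤ sBadLiminf α θ}

end Scalar

section CF

/-- The Gauss map `T x = 1/x - [1/x]` on `𝔽_q((z⁻¹))`. -/
def gaussMap (x : FF K) : FF K := fracPart x⁻¹

/-- `pquot α k` is the `(k+1)`-st partial quotient `A_{k+1} = [1 / T^k α]` of the
continued fraction expansion of `α`. -/
def pquot (α : FF K) (k : ℕ) : Polynomial K := intPoly ((gaussMap^[k] α)⁻¹)

/-- `cfQ α k` is the denominator `Q_k` of the `k`-th convergent of the continued fraction
expansion of `α`: `Q_0 = 1`, `Q_1 = A_1`, `Q_{k+2} = A_{k+2} Q_{k+1} + Q_k`. -/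
def cfQ (α : FF K) : ℕ → Polynomial K
  | 0 => 1
  | 1 => pquot α 0
  | (k + 2) => pquot α (k + 1) * cfQ α (k + 1) + cfQ α k

/-- `α` is singular on average: for every `c > 0` the proportion of `l ∈ {1, …, N}` for
which `‖{Q α}‖ ≤ c 2^{-l}` has a solution `Q ∈ 𝔽_q[z]` with `0 < ‖Q‖ ≤ 2^l` tends to `1`
as `N → ∞`. -/
def SingularOnAverage (α : FF K) : Prop :=
  ∀ c : ℝ, 0 < c →
    Filter.Tendsto
      (fun N : ℕ =>
        (((Finset.Icc 1 N).filter (fun l : ℕ =>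
            ∃ Q : Polynomial K, Q ≠ 0 ∧ fnorm (polyF Q) ≤ 2 ^ l ∧
              fnorm (fracPart (polyF Q * α)) ≤ c / 2 ^ l)).card : ℝ) / (N : ℝ))
      Filter.atTop (nhds 1)

end CF

end FPSDA

open FPSDA MeasureTheory

/-!
Call the coefficient of `z⁻¹` the residue. An element `x` is a polynomial if and only if the
residue of `P x` vanishes for every polynomial `P`. The functionals `v ↦ res (u₁v₁ + ⋯ + uₙvₙ)`
with `u` polynomial of degree less than `N` are exactly the linear functionals of the first `N`
fractional coefficients of `v`, and these coefficients decide whether `⟨v⟩ < q⁻ᴺ`. Such a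
functional vanishes on all the vectors `A x` if and only if `Aᵀ u` is polynomial, because
`u · A x = Aᵀ u · x`. So finite-dimensional linear duality says that `⟨A x - θ⟩ < q⁻ᴺ` is solvable
if and only if `res (u · θ) = 0` for all `u` of degree less than `N` with `Aᵀ u` polynomial.
Letting `N` grow and replacing `u` by its multiples `P u` turns this into Kronecker's criterion.
-/

namespace FPSDA

open scoped Polynomial Matrix

lemma mem_range_iff_forall_dotProduct_eq_zero {F V ι : Type*} [Field F] [AddCommGroup V]
    [Module F V] [Fintype ι] (L : V →ₗ[F] ι → F) (b : ι → F) :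
    b ∈ LinearMap.range L ↔ ∀ c : ι → F, (∀ x, c ⬝ᵥ L x = 0) → c ⬝ᵥ b = 0 := by
  rw [← Subspace.forall_mem_dualAnnihilator_apply_eq_zero_iff,
    (dotProductEquiv F ι).surjective.forall]
  simp only [Submodule.mem_dualAnnihilator, LinearMap.mem_range, forall_exists_index,
    forall_apply_eq_imp_iff, dotProductEquiv_apply_apply]

section Field

variable {K ι κ : Type*} [Field K]

instance : Algebra K (FF K) := inferInstanceAs (Algebra K (LaurentSeries K))

lemma toL_algebraMap (a : K) : toL (algebraMap K (FF K) a) = HahnSeries.single 0 a :=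
  HahnSeries.ofPowerSeries_C a

/-- The embedding `polyF` of `𝔽_q[z]` into `𝔽_q((z⁻¹))` as a homomorphism of `𝔽_q`-algebras. -/
def polyHom : K[X] →ₐ[K] FF K :=
  Polynomial.aeval (HahnSeries.single (-1 : ℤ) (1 : K) : LaurentSeries K)

lemma polyF_mul (P Q : K[X]) : polyF (P * Q) = polyF P * polyF Q := map_mul polyHom P Q

lemma polyF_sum {α : Type*} (s : Finset α) (f : α → K[X]) :
    polyF (∑ i ∈ s, f i) = ∑ i ∈ s, polyF (f i) := map_sum polyHom f s

lemma toL_polyF_monomial (l : ℕ) (a : K) :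
    toL (polyF (Polynomial.monomial l a)) = HahnSeries.single (-(l : ℤ)) a := by
  have haeval : toL (polyF (Polynomial.monomial l a)) =
      toL (algebraMap K (FF K) a) * HahnSeries.single (-1 : ℤ) (1 : K) ^ l :=
    Polynomial.aeval_monomial (A := LaurentSeries K) _
  rw [haeval, toL_algebraMap, HahnSeries.single_pow, HahnSeries.single_mul_single, one_pow,
    mul_one, zero_add, smul_neg, nsmul_one]

/-- The coefficient of `z⁻ᵏ`, as a linear functional on `𝔽_q((z⁻¹))`. -/
def coeffHom (k : ℤ) : FF K →ₗ[K] K where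
  toFun x := (toL x).coeff k
  map_add' _ _ := rfl
  map_smul' a x := by
    rw [Algebra.smul_def]
    change (toL (algebraMap K (FF K) a) * toL x).coeff k = a * (toL x).coeff k
    rw [toL_algebraMap, HahnSeries.coeff_single_zero_mul]

lemma coeffHom_apply (k : ℤ) (x : FF K) : coeffHom k x = (toL x).coeff k := rfl

lemma ext_coeffHom {x y : FF K} (h : ∀ k, coeffHom k x = coeffHom k y) : x = y :=
  HahnSeries.ext (funext h)

lemma coeffHom_polyF_mul (k : ℤ) (P : K[X]) (x : FF K) :
    coeffHom k (polyF P * x) = P.sum fun l a ↦ a * coeffHom (k + l) x := by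
  conv_lhs => rw [P.as_sum_support, polyF_sum, Finset.sum_mul, map_sum]
  refine Finset.sum_congr rfl fun l _ ↦ ?_
  change (toL (polyF (Polynomial.monomial l (P.coeff l))) * toL x).coeff k = _
  rw [toL_polyF_monomial, HahnSeries.coeff_single_mul, sub_neg_eq_add]
  rfl

lemma coeffHom_polyF (k : ℤ) (P : K[X]) :
    coeffHom k (polyF P) = P.sum fun l a ↦ if k + l = 0 then a else 0 := by
  rw [← mul_one (polyF P), coeffHom_polyF_mul]
  have hone (j : ℤ) : coeffHom j (1 : FF K) = if j = 0 then 1 else 0 := by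
    split_ifs with hj
    · rw [hj]
      exact HahnSeries.coeff_single_same 0 1
    · exact HahnSeries.coeff_single_of_ne hj
  simp only [hone, mul_ite, mul_one, mul_zero]

lemma coeffHom_polyF_of_pos {k : ℤ} (hk : 0 < k) (P : K[X]) : coeffHom k (polyF P) = 0 := by
  rw [coeffHom_polyF]
  exact Finset.sum_eq_zero fun l _ ↦ if_neg (by omega)

lemma coeffHom_neg_polyF (l : ℕ) (P : K[X]) : coeffHom (-(l : ℤ)) (polyF P) = P.coeff l := by
  simp only [coeffHom_polyF, Polynomial.sum_def, neg_add_eq_zero, Nat.cast_inj,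
    Finset.sum_ite_eq, Polynomial.mem_support_iff, ite_not, ite_eq_right_iff]
  exact Eq.symm

lemma coeff_intPoly (x : FF K) (l : ℕ) : (intPoly x).coeff l = coeffHom (-(l : ℤ)) x := by
  simp only [intPoly, Polynomial.finsetSum_coeff, Polynomial.coeff_monomial, Finset.sum_ite_eq',
    Finset.mem_range, coeffHom_apply, ite_eq_left_iff]
  exact fun hl ↦ (HahnSeries.coeff_eq_zero_of_lt_order (by omega)).symm

lemma coeffHom_polyF_intPoly_of_nonpos {k : ℤ} (hk : k ≤ 0) (x : FF K) :
    coeffHom k (polyF (intPoly x)) = coeffHom k x := by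
  obtain ⟨l, rfl⟩ : ∃ l : ℕ, k = -(l : ℤ) := ⟨k.natAbs, by omega⟩
  rw [coeffHom_neg_polyF, coeff_intPoly]

lemma exists_eq_polyF_iff_forall_coeffHom (x : FF K) :
    (∃ P : K[X], x = polyF P) ↔ ∀ k > 0, coeffHom k x = 0 := by
  constructor
  · rintro ⟨P, rfl⟩ k hk
    exact coeffHom_polyF_of_pos hk P
  · refine fun h ↦ ⟨intPoly x, ext_coeffHom fun k ↦ ?_⟩
    obtain hk | hk := le_or_gt k 0
    · rw [coeffHom_polyF_intPoly_of_nonpos hk]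
    · rw [coeffHom_polyF_of_pos hk, h k hk]

/-- The residue of `x ∈ 𝔽_q((z⁻¹))`, i.e. its coefficient of `z⁻¹`. The pairing
`(u, v) ↦ residue (u ⬝ᵥ v)` of polynomial vectors with arbitrary vectors carries the duality behind
Kronecker's theorem. -/
def residue : FF K →ₗ[K] K := coeffHom 1

lemma residue_polyF (P : K[X]) : residue (polyF P) = 0 := coeffHom_polyF_of_pos one_pos P

lemma exists_eq_polyF_iff_forall_residue (x : FF K) :
    (∃ P : K[X], x = polyF P) ↔ ∀ P : K[X], residue (polyF P * x) = 0 := by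
  constructor
  · rintro ⟨Q, rfl⟩ P
    rw [← polyF_mul, residue_polyF]
  · refine fun h ↦ (exists_eq_polyF_iff_forall_coeffHom x).mpr fun k hk ↦ ?_
    have hres := h (Polynomial.monomial (k - 1).toNat 1)
    have hk' : 1 + ((k - 1).toNat : ℤ) = k := by omega
    rwa [residue, coeffHom_polyF_mul, Polynomial.sum_monomial_index, hk', one_mul] at hres
    exact zero_mul _

section Duality

variable [Fintype ι]

lemma exists_eq_polyF_vec_iff_forall_residue (v : ι → FF K) :
    (∃ w : ι → K[X], v = fun i ↦ polyF (w i)) ↔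
      ∀ x : ι → K[X], residue (v ⬝ᵥ fun i ↦ polyF (x i)) = 0 := by
  constructor
  · rintro ⟨w, rfl⟩ x
    simp only [dotProduct, ← polyF_mul, ← polyF_sum, residue_polyF]
  · intro h
    have hv (i : ι) : ∃ P : K[X], v i = polyF P := by
      refine (exists_eq_polyF_iff_forall_residue _).mpr fun P ↦ ?_
      have hsingle : (fun j ↦ polyF (Pi.single (M := fun _ ↦ K[X]) i P j)) =
          Pi.single i (polyF P) :=
        funext fun j ↦ Pi.apply_single (fun _ ↦ polyF) (fun _ ↦ map_zero polyHom) i P j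
      have hres := h (Pi.single i P)
      rwa [hsingle, dotProduct_single, mul_comm] at hres
    choose w hw using hv
    exact ⟨w, funext hw⟩

lemma exists_transpose_mulVec_eq_polyF_iff [Fintype κ] (A : Matrix ι κ (FF K)) (u : ι → FF K) :
    (∃ w : κ → K[X], Aᵀ *ᵥ u = fun j ↦ polyF (w j)) ↔
      ∀ x : κ → K[X], residue (u ⬝ᵥ A *ᵥ fun j ↦ polyF (x j)) = 0 := by
  simp only [exists_eq_polyF_vec_iff_forall_residue, Matrix.mulVec_transpose,
    Matrix.dotProduct_mulVec]

end Duality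

/-- The first `N` fractional coefficients of the entries of a vector: at the index `(i, l)` stands
the coefficient of `z⁻⁽ˡ⁺¹⁾` in the `i`-th entry. They vanish if and only if the vector is at
distance less than `q⁻ᴺ` from a polynomial vector. -/
def fracCoeffs (N : ℕ) : (ι → FF K) →ₗ[K] ι × Fin N → K :=
  LinearMap.pi fun p ↦ coeffHom (1 + (p.2 : ℕ)) ∘ₗ LinearMap.proj p.1

lemma fracCoeffs_apply {N : ℕ} (v : ι → FF K) (p : ι × Fin N) :
    fracCoeffs N v p = coeffHom (1 + (p.2 : ℕ)) (v p.1) := rfl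

lemma fracCoeffs_eq_zero_iff {N : ℕ} {v : ι → FF K} :
    fracCoeffs N v = 0 ↔ ∀ i, ∀ k : ℤ, 0 < k → k ≤ N → coeffHom k (v i) = 0 := by
  refine ⟨fun h i k hk hkN ↦ ?_, fun h ↦ funext fun p ↦ h p.1 _ (by omega) (by omega)⟩
  have hcoeff := congrFun h (i, ⟨(k - 1).toNat, by omega⟩)
  rwa [fracCoeffs_apply, show 1 + ((k - 1).toNat : ℤ) = k by omega] at hcoeff

lemma exists_mem_degreeLT_coeff_eq {N : ℕ} (c : ι × Fin N → K) :
    ∃ u : ι → K[X], (∀ i, u i ∈ Polynomial.degreeLT K N) ∧ (fun p ↦ (u p.1).coeff p.2) = c := by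
  let e := Polynomial.degreeLTEquiv K N
  refine ⟨fun i ↦ e.symm fun l ↦ c (i, l), fun i ↦ Subtype.property _, funext fun p ↦ ?_⟩
  exact congrFun (e.apply_symm_apply fun l ↦ c (p.1, l)) p.2

lemma exists_forall_mem_degreeLT [Finite ι] (u : ι → K[X]) :
    ∃ N, ∀ i, u i ∈ Polynomial.degreeLT K N := by
  obtain ⟨D, hD⟩ := Finite.exists_le fun i ↦ (u i).natDegree
  refine ⟨D + 1, fun i ↦ Polynomial.mem_degreeLT.mpr ?_⟩
  exact Polynomial.degree_le_natDegree.trans_lt (mod_cast Nat.lt_succ_of_le (hD i))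

variable [Fintype ι]

lemma residue_dotProduct_eq_coeff_dotProduct_fracCoeffs {N : ℕ} {u : ι → K[X]}
    (hu : ∀ i, u i ∈ Polynomial.degreeLT K N) (v : ι → FF K) :
    residue ((fun i ↦ polyF (u i)) ⬝ᵥ v) =
      (fun p : ι × Fin N ↦ (u p.1).coeff p.2) ⬝ᵥ fracCoeffs N v := by
  simp only [dotProduct, map_sum, Fintype.sum_prod_type, fracCoeffs_apply]
  refine Finset.sum_congr rfl fun i _ ↦ ?_
  rw [residue, coeffHom_polyF_mul]
  exact (Polynomial.sum_fin _ (fun _ ↦ zero_mul _) (Polynomial.mem_degreeLT.mp (hu i))).symm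

lemma forall_residue_dotProduct_eq_zero_iff (A : Matrix ι κ (FF K)) (θ : ι → FF K) :
    (∀ u : ι → K[X], (∃ w : κ → K[X], Aᵀ *ᵥ (fun i ↦ polyF (u i)) = fun j ↦ polyF (w j)) →
        residue ((fun i ↦ polyF (u i)) ⬝ᵥ θ) = 0) ↔
      ∀ u : ι → K[X], (∃ w : κ → K[X], Aᵀ *ᵥ (fun i ↦ polyF (u i)) = fun j ↦ polyF (w j)) →
        ∃ P : K[X], (fun i ↦ polyF (u i)) ⬝ᵥ θ = polyF P := by
  constructor
  · rintro h u ⟨w, hw⟩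
    refine (exists_eq_polyF_iff_forall_residue _).mpr fun P ↦ ?_
    have hu : (fun i ↦ polyF ((P • u) i)) = polyF P • fun i ↦ polyF (u i) :=
      funext fun i ↦ polyF_mul P (u i)
    have hPw : Aᵀ *ᵥ (fun i ↦ polyF ((P • u) i)) = fun j ↦ polyF ((P • w) j) := by
      rw [hu, Matrix.mulVec_smul, hw]
      exact funext fun j ↦ (polyF_mul P (w j)).symm
    have hres := h (P • u) ⟨P • w, hPw⟩
    rwa [hu, smul_dotProduct, smul_eq_mul] at hres
  · intro h u hu
    obtain ⟨P, hP⟩ := h u hu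
    rw [hP, residue_polyF]

variable [Fintype κ]

lemma exists_fracCoeffs_sub_eq_zero_iff (A : Matrix ι κ (FF K)) (θ : ι → FF K) (N : ℕ) :
    (∃ x : κ → K[X], fracCoeffs N (A *ᵥ (fun j ↦ polyF (x j)) - θ) = 0) ↔
      ∀ u : ι → K[X], (∀ i, u i ∈ Polynomial.degreeLT K N) →
        (∃ w : κ → K[X], Aᵀ *ᵥ (fun i ↦ polyF (u i)) = fun j ↦ polyF (w j)) →
        residue ((fun i ↦ polyF (u i)) ⬝ᵥ θ) = 0 := by
  let L : (κ → K[X]) →ₗ[K] ι × Fin N → K :=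
    fracCoeffs N ∘ₗ A.mulVecLin.restrictScalars K ∘ₗ polyHom.toLinearMap.compLeft κ
  have hL (x : κ → K[X]) : fracCoeffs N (A *ᵥ fun j ↦ polyF (x j)) = L x := rfl
  simp only [map_sub, sub_eq_zero, hL, exists_transpose_mulVec_eq_polyF_iff]
  rw [← LinearMap.mem_range, mem_range_iff_forall_dotProduct_eq_zero]
  constructor
  · intro h u hu hres
    simp only [residue_dotProduct_eq_coeff_dotProduct_fracCoeffs hu, hL] at hres ⊢
    exact h _ hres
  · intro h c hc
    obtain ⟨u, hu, rfl⟩ := exists_mem_degreeLT_coeff_eq c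
    simp only [← hL, ← residue_dotProduct_eq_coeff_dotProduct_fracCoeffs hu] at hc ⊢
    exact h u hu hc

/-- Over an infinite field `K` there is no `q`, hence no `vdist`: that the first `N` fractional
coefficients vanish takes the place of `⟨A x - θ⟩ < q⁻ᴺ`. -/
theorem kronecker_theorem_general (A : Matrix ι κ (FF K)) (θ : ι → FF K) :
    (∀ N, ∃ x : κ → K[X], fracCoeffs N (A *ᵥ (fun j ↦ polyF (x j)) - θ) = 0) ↔
      ∀ u : ι → K[X], (∃ w : κ → K[X], Aᵀ *ᵥ (fun i ↦ polyF (u i)) = fun j ↦ polyF (w j)) →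
        ∃ P : K[X], (fun i ↦ polyF (u i)) ⬝ᵥ θ = polyF P := by
  simp only [← forall_residue_dotProduct_eq_zero_iff, exists_fracCoeffs_sub_eq_zero_iff]
  constructor
  · intro h u
    obtain ⟨N, hu⟩ := exists_forall_mem_degreeLT u
    exact h N u hu
  · exact fun h _ u _ ↦ h u

end Field

section Distance

variable {K ι : Type*} [Field K] [Fintype K] [Fintype ι]

lemma one_lt_q : (1 : ℝ) < Fintype.card K := mod_cast Fintype.one_lt_card

lemma fnorm_lt_zpow_neg_iff (x : FF K) (N : ℤ) :
    fnorm x < (Fintype.card K : ℝ) ^ (-N) ↔ ∀ k ≤ N, coeffHom k x = 0 := by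
  have hq : (1 : ℝ) < Fintype.card K := one_lt_q
  by_cases hx : x = 0
  · simp only [hx, map_zero, implies_true, iff_true, fnorm_eq_zero.mpr]
    exact zpow_pos (one_pos.trans hq) _
  · have hL : toL x ≠ 0 := mt toL_eq_zero.mp hx
    rw [fnorm, if_neg hL, zpow_lt_zpow_iff_right₀ hq, neg_lt_neg_iff]
    refine ⟨fun hN k hk ↦ HahnSeries.coeff_eq_zero_of_lt_order (hk.trans_lt hN), fun h ↦ ?_⟩
    by_contra! hN
    exact hL (HahnSeries.coeff_order_eq_zero.mp (h _ hN))

lemma vnorm_lt_iff {v : ι → FF K} {r : ℝ} (hr : 0 < r) : vnorm v < r ↔ ∀ i, fnorm (v i) < r := by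
  refine ⟨fun h i ↦ (Finite.le_ciSup (fun i ↦ fnorm (v i)) i).trans_lt h, fun h ↦ ?_⟩
  cases isEmpty_or_nonempty ι
  · rwa [vnorm, Real.iSup_of_isEmpty]
  · obtain ⟨i, hi⟩ := exists_eq_ciSup_of_finite (f := fun i ↦ fnorm (v i))
    exact hi.symm.trans_lt (h i)

lemma vdist_lt_iff {v : ι → FF K} {r : ℝ} :
    vdist v < r ↔ ∃ y : ι → K[X], vnorm (fun i ↦ v i - polyF (y i)) < r :=
  ciInf_lt_iff ⟨0, Set.forall_mem_range.mpr fun _ ↦ Real.iSup_nonneg fun _ ↦ fnorm_nonneg _⟩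

lemma vdist_lt_zpow_neg_iff {v : ι → FF K} {N : ℕ} :
    vdist v < (Fintype.card K : ℝ) ^ (-(N : ℤ)) ↔ fracCoeffs N v = 0 := by
  have hpos : (0 : ℝ) < (Fintype.card K : ℝ) ^ (-(N : ℤ)) := zpow_pos (one_pos.trans one_lt_q) _
  simp only [vdist_lt_iff, vnorm_lt_iff hpos, fnorm_lt_zpow_neg_iff, map_sub, sub_eq_zero,
    fracCoeffs_eq_zero_iff]
  constructor
  · rintro ⟨y, hy⟩ i k hk hkN
    rw [hy i k hkN, coeffHom_polyF_of_pos hk]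
  · refine fun h ↦ ⟨fun i ↦ intPoly (v i), fun i k hkN ↦ ?_⟩
    obtain hk | hk := le_or_gt k 0
    · rw [coeffHom_polyF_intPoly_of_nonpos hk]
    · rw [coeffHom_polyF_of_pos hk, h i k hk hkN]

lemma forall_pos_exists_vdist_le_iff {α : Type*} (f : α → ι → FF K) :
    (∀ ε > 0, ∃ x, vdist (f x) ≤ ε) ↔ ∀ N, ∃ x, fracCoeffs N (f x) = 0 := by
  have hq : (1 : ℝ) < Fintype.card K := one_lt_q
  simp only [← vdist_lt_zpow_neg_iff]
  constructor
  · intro h N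
    obtain ⟨ε, hε, hεN⟩ := exists_between (zpow_pos (one_pos.trans hq) (-(N : ℤ)))
    exact (h ε hε).imp fun x hx ↦ hx.trans_lt hεN
  · intro h ε hε
    obtain ⟨N, hN⟩ := exists_pow_lt_of_lt_one hε (inv_lt_one_of_one_lt₀ hq)
    rw [inv_pow, ← zpow_natCast, ← zpow_neg] at hN
    exact (h N).imp fun x hx ↦ (hx.trans hN).le

end Distance

end FPSDA

/-- **Kronecker's theorem** over the field of formal power series `𝔽_q((z⁻¹))`:
for `A ∈ M_{n,m}(𝔽_q((z⁻¹)))` and `θ ∈ 𝔽_q((z⁻¹))ⁿ`, the values `A x` with `x` a polynomial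
vector approximate `θ` modulo polynomial vectors arbitrarily well if and only if every
polynomial vector `u` with `Aᵀ u` a polynomial vector satisfies
`u₁θ₁ + ⋯ + u_nθ_n ∈ 𝔽_q[z]`. -/
theorem kronecker_theorem {K : Type*} [Field K] [Fintype K] {m n : ℕ}
    (hm : 0 < m) (hn : 0 < n)
    (A : Matrix (Fin n) (Fin m) (FF K)) (θ : Fin n → FF K) :
    (∀ ε : ℝ, 0 < ε →
        ∃ x : Fin m → Polynomial K, vdist (A.mulVec (fun j => polyF (x j)) - θ) ≤ ε) ↔
      (∀ u : Fin n → Polynomial K,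
        (∃ w : Fin m → Polynomial K,
            A.transpose.mulVec (fun i => polyF (u i)) = fun j => polyF (w j)) →
        ∃ P : Polynomial K, (∑ i, polyF (u i) * θ i) = polyF P) := by
  exact (forall_pos_exists_vdist_le_iff _).trans (kronecker_theorem_general A θ)
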